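/- Let Λ = F_r * C_{p_1} * ⋯ * C_{p_m} with r + m − 1 − Σ_{i=1}^m 1/p_i > 0, and let G_n denote an index n subgroup of Λ chosen uniformly at random. Then for every nontrivial conjugacy class K of Λ, 𝔼[Z_K(G_n)] = o(n) as n → ∞. (By the fixed-point characterisation of weak-* convergence of invariant random subgroups, this expresses that G_n converges, as an invariant random subgroup of Λ, to the Dirac mass at the trivial subgroup.) -/

import Mathlib

open Filter Topology Asymptotics
open scoped TensorProduct

/-- the free product `F_r * C_{p_1} * ⋯ * C_{p_m}` of a free group of rank `r` and
cyclic groups of orders `p_1,…,p_m`, as a presented group. -/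
abbrev FuchsianFreeProduct (r m : ℕ) (p : Fin m → ℕ) : Type :=
  PresentedGroup {w : FreeGroup (Fin r ⊕ Fin m) | ∃ i : Fin m, w = FreeGroup.of (Sum.inr i) ^ p i}

/-- `Z_g(H)`: the number of fixed points of `g` acting on the coset space `G ⧸ H`.
For any `g` in a conjugacy class `K`, this equals `Z_K(H)`. -/
noncomputable def fixedCosetCount {G : Type*} [Group G] (g : G) (H : Subgroup G) : ℕ :=
  Nat.card {x : G ⧸ H // g • x = x}

/-- the expectation of `f` over a uniformly random index `n` subgroup of `G` -/
noncomputable def subgroupExp (G : Type*) [Group G] (n : ℕ) (f : Subgroup G → ℝ) : ℝ :=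
  (∑' H : {H : Subgroup G // H.index = n}, f H.1) /
    (Nat.card {H : Subgroup G // H.index = n} : ℝ)

/-!
An index-`n` subgroup with labelled cosets is a transitive action on `n` points with a base point,
so the expectation of `Z_g` is the average number of fixed points of `g` over the transitive actions
`φ` of a free product of cyclic groups. These averages are bounded by double counting. Suppose that
for every `φ` the points of a set `F φ` admit the following surgery: given `z ∈ F φ` and all but
boundedly many `w ∈ F φ`, there is a transitive action `ψ` such that `φ` and `w` are determined by
`ψ` and `z`. Then the sum of `|F φ| ^ 2` over `φ` is at most `O(n)` times the number of actions, and
by Cauchy-Schwarz the average of `|F φ|` is `O(√n)`.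

* If a word `g` ending in the letter `a` brings `z` back to itself for the first time at its last
  step, conjugate the action of the factor of `a` by the transposition of `z` and `w`: now `g` sends
  `z` to `w`. Points that return earlier are fixed by shorter words.
* If `g` is a power `c ^ e ≠ 1` of the generator of a factor, then a fixed point has a period `d`
  that properly divides the order of `c` (everything divides `0`, the order of `c` if it is
  infinite). With `d * k` dividing that order and `k ≥ 2`, merge `k` of the cycles of length `d`
  into one, the first two of them being those of `z` and `w`.
-/

open Equiv (Perm)
open scoped Finset
open Monoid (CoprodI)

section Negligible

variable {T : ℕ → Type*} [∀ n, Fintype (T n)]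

/-- The average of `f n` over the finite type `T n` is `o(n)`. The denominator is cleared so that
the `n` with `T n` empty need no special treatment. -/
def IsNegligible (f : ∀ n, T n → ℕ) : Prop :=
  (fun n => ∑ t, (f n t : ℝ)) =o[atTop] fun n => (n : ℝ) * Fintype.card (T n)

variable {f g : ∀ n, T n → ℕ}

theorem IsNegligible.mono (hg : IsNegligible g) (hfg : ∀ n t, f n t ≤ g n t) :
    IsNegligible f := by
  refine (IsBigO.of_norm_le fun n => ?_).trans_isLittleO hg
  rw [Real.norm_of_nonneg (Finset.sum_nonneg fun t _ => (f n t).cast_nonneg)]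
  exact Finset.sum_le_sum fun t _ => Nat.cast_le.2 (hfg n t)

theorem isNegligible_sum {ι : Type*} {s : Finset ι} {f : ι → ∀ n, T n → ℕ}
    (hf : ∀ i ∈ s, IsNegligible (f i)) : IsNegligible fun n t => ∑ i ∈ s, f i n t := by
  refine (IsLittleO.fun_sum hf).congr_left fun n => ?_
  push_cast
  exact Finset.sum_comm

theorem IsNegligible.add (hf : IsNegligible f) (hg : IsNegligible g) :
    IsNegligible fun n t => f n t + g n t := by
  refine (IsLittleO.add hf hg).congr_left fun n => ?_
  push_cast
  exact Finset.sum_add_distrib.symm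

theorem IsNegligible.average_isLittleO (hf : IsNegligible f) :
    (fun n => (∑ t, (f n t : ℝ)) / Fintype.card (T n)) =o[atTop] fun n => (n : ℝ) := by
  refine isLittleO_iff.2 fun c hc => (isLittleO_iff.1 hf hc).mono fun n hn => ?_
  simp only [norm_div, norm_mul, Real.norm_natCast] at hn ⊢
  exact div_le_of_le_mul₀ (by positivity) (by positivity) (by linarith)

theorem isNegligible_of_sum_sq_le (C : ℕ)
    (hf : ∀ n, ∑ t, f n t ^ 2 ≤ C * n * Fintype.card (T n)) : IsNegligible f := by
  have sum_le (n : ℕ) : ∑ t, (f n t : ℝ) ≤ √(C * n) * Fintype.card (T n) := by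
    have sum_sq_le : ∑ t, (f n t : ℝ) ^ 2 ≤ C * n * Fintype.card (T n) := mod_cast hf n
    have cauchySchwarz := sq_sum_le_card_mul_sum_sq (s := Finset.univ) (f := fun t => (f n t : ℝ))
    refine le_of_sq_le_sq ?_ (by positivity)
    calc (∑ t, (f n t : ℝ)) ^ 2 ≤ Fintype.card (T n) * ∑ t, (f n t : ℝ) ^ 2 := cauchySchwarz
      _ ≤ Fintype.card (T n) * (C * n * Fintype.card (T n)) := by gcongr
      _ = (√(C * n) * Fintype.card (T n)) ^ 2 := by
          rw [mul_pow, Real.sq_sqrt (by positivity)]; ring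
  have sqrt_isLittleO : (fun n : ℕ => √(C * n)) =o[atTop] fun n : ℕ => (n : ℝ) := by
    have const_isLittleO : (fun _ : ℕ => √C) =o[atTop] fun n : ℕ => √n :=
      isLittleO_const_left.2 <| .inr <| tendsto_norm_atTop_atTop.comp <|
        Real.tendsto_sqrt_atTop.comp tendsto_natCast_atTop_atTop
    refine (const_isLittleO.mul_isBigO (isBigO_refl (fun n : ℕ => √n) atTop)).congr ?_ ?_ <;> simp
  refine (IsBigO.of_norm_le fun n => ?_).trans_isLittleO
    (sqrt_isLittleO.mul_isBigO (isBigO_refl (fun n => (Fintype.card (T n) : ℝ)) atTop))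
  rw [Real.norm_of_nonneg (Finset.sum_nonneg fun t _ => (f n t).cast_nonneg)]
  exact sum_le n

end Negligible

section DoubleCounting

/-- Count, for fixed `z`, the `w ∈ F t`: all but `C` of them are traded for some `t'` with
`R t z w t'`, and no `t'` is used twice. -/
theorem sum_card_sq_le {T α : Type*} [Fintype T] [Fintype α] (F : T → Finset α)
    (R : T → α → α → T → Prop) (C : ℕ)
    (hbad : ∀ t, ∀ z ∈ F t, ∃ B : Finset α, #B ≤ C ∧ ∀ w ∈ F t, w ∉ B → ∃ t', R t z w t')
    (hinj : ∀ t₁ t₂ z w₁ w₂ t', R t₁ z w₁ t' → R t₂ z w₂ t' → t₁ = t₂ ∧ w₁ = w₂) :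
    ∑ t, #(F t) ^ 2 ≤ (C + 1) * Fintype.card α * Fintype.card T := by
  classical
  choose! B hB hR using hbad
  have good_le (z : α) : ∑ t with z ∈ F t, #(F t \ B t z) ≤ Fintype.card T := by
    rw [← Finset.card_sigma, ← Finset.card_univ]
    refine Finset.card_le_card_of_forall_subsingleton
      (fun x t' => R x.1 z x.2 t') ?_ ?_
    · rintro ⟨t, w⟩ hx
      simp only [Finset.mem_sigma, Finset.mem_filter_univ, Finset.mem_sdiff] at hx
      obtain ⟨t', ht'⟩ := hR t z hx.1 w hx.2.1 hx.2.2
      exact ⟨t', Finset.mem_univ _, ht'⟩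
    · rintro t' - ⟨t₁, w₁⟩ h₁ ⟨t₂, w₂⟩ h₂
      obtain ⟨rfl, rfl⟩ := hinj _ _ _ _ _ _ h₁.2 h₂.2
      rfl
  have row_le (z : α) : ∑ t with z ∈ F t, #(F t) ≤ (C + 1) * Fintype.card T := by
    calc ∑ t with z ∈ F t, #(F t)
        ≤ ∑ t with z ∈ F t, (C + #(F t \ B t z)) := Finset.sum_le_sum fun t ht => by
          have := Finset.card_le_card_sdiff_add_card (s := F t) (t := B t z)
          have := hB t z (Finset.mem_filter.1 ht).2
          omega
      _ = #{t | z ∈ F t} * C + ∑ t with z ∈ F t, #(F t \ B t z) := by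
          rw [Finset.sum_add_distrib, Finset.sum_const, smul_eq_mul]
      _ ≤ Fintype.card T * C + Fintype.card T :=
          Nat.add_le_add (Nat.mul_le_mul_right _ (Finset.card_le_univ _)) (good_le z)
      _ = (C + 1) * Fintype.card T := by ring
  calc ∑ t, #(F t) ^ 2 = ∑ t, ∑ _z ∈ F t, #(F t) := by simp [sq]
    _ = ∑ z, ∑ t with z ∈ F t, #(F t) := Finset.sum_comm' (by simp)
    _ ≤ ∑ _z : α, (C + 1) * Fintype.card T := Finset.sum_le_sum fun z _ => row_le z
    _ = (C + 1) * Fintype.card α * Fintype.card T := by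
        rw [Finset.sum_const, Finset.card_univ, smul_eq_mul]; ring

theorem isNegligible_card_of_exchange {T : ℕ → Type*} [∀ n, Fintype (T n)]
    (F : ∀ n, T n → Finset (Fin n)) (R : ∀ n, T n → Fin n → Fin n → T n → Prop) (C : ℕ)
    (hbad : ∀ n t, ∀ z ∈ F n t,
      ∃ B : Finset (Fin n), #B ≤ C ∧ ∀ w ∈ F n t, w ∉ B → ∃ t', R n t z w t')
    (hinj : ∀ n t₁ t₂ z w₁ w₂ t', R n t₁ z w₁ t' → R n t₂ z w₂ t' → t₁ = t₂ ∧ w₁ = w₂) :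
    IsNegligible fun n t => #(F n t) :=
  isNegligible_of_sum_sq_le (C + 1) fun n => by
    simpa using sum_card_sq_le (F n) (R n) C (hbad n) (hinj n)

end DoubleCounting

section TransitiveHom

variable {G α : Type*} [Group G]

/-- The transitive actions of `G` on `α`, as permutation representations. -/
abbrev TransitiveHom (G α : Type*) [Group G] : Type _ :=
  {φ : G →* Perm α // ∀ x y, ∃ g, φ g x = y}

/-- The permutations that map every orbit of the action `φ` to itself. -/
def orbitSubgroup (φ : G →* Perm α) : Subgroup (Perm α) where
  carrier := {s | ∀ x, ∃ g, φ g x = s x}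
  one_mem' x := ⟨1, by simp⟩
  mul_mem' {s t} hs ht x := by
    obtain ⟨g, hg⟩ := ht x
    obtain ⟨k, hk⟩ := hs (t x)
    exact ⟨k * g, by simp [hg, hk]⟩
  inv_mem' {s} hs x := by
    obtain ⟨g, hg⟩ := hs (s⁻¹ x)
    exact ⟨g⁻¹, by rw [map_inv, Perm.inv_eq_iff_eq, hg]; simp⟩

theorem apply_mem_orbitSubgroup (φ : G →* Perm α) (g : G) : φ g ∈ orbitSubgroup φ :=
  fun _ => ⟨g, rfl⟩

theorem swap_mem_orbitSubgroup [DecidableEq α] {φ : G →* Perm α} {z w : α}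
    (hzw : ∃ g, φ g z = w) : Equiv.swap z w ∈ orbitSubgroup φ := by
  intro x
  obtain ⟨g, rfl⟩ := hzw
  by_cases hx : Equiv.swap z (φ g z) x = x
  · exact ⟨1, by simp [hx]⟩
  · rcases Equiv.eq_or_eq_of_swap_apply_ne_self hx with rfl | rfl
    · exact ⟨g, by simp⟩
    · exact ⟨g⁻¹, by simp⟩

noncomputable instance [Finite (G →* Perm α)] : Fintype (TransitiveHom G α) := Fintype.ofFinite _

theorem finite_monoidHom_of_isCyclic {H K : Type*} [Group H] [IsCyclic H] [Group K] [Finite K] :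
    Finite (H →* K) := by
  obtain ⟨c, hc⟩ := IsCyclic.exists_generator (α := H)
  exact Finite.of_injective (fun φ : H →* K => φ c) fun φ ψ h =>
    (φ.eq_iff_eq_on_generator hc ψ).2 h

end TransitiveHom

section CoprodI

variable {J : Type*} {H : J → Type*} [∀ j, Group (H j)] {α : Type*}

instance [Finite J] [∀ j, IsCyclic (H j)] {K : Type*} [Group K] [Finite K] :
    Finite (CoprodI H →* K) :=
  have (j : J) : Finite (H j →* K) := finite_monoidHom_of_isCyclic
  .of_equiv _ CoprodI.lift

theorem range_le_orbitSubgroup {φ ψ : CoprodI H →* Perm α}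
    (h : ∀ i (a : H i), φ (CoprodI.of a) ∈ orbitSubgroup ψ) : φ.range ≤ orbitSubgroup ψ := by
  rintro _ ⟨g, rfl⟩
  induction g using CoprodI.induction_on with
  | one => simp
  | of i a => exact h i a
  | mul g k hg hk => simpa using mul_mem hg hk

/-- The action `ψ`, which is transitive because its orbits contain those of a transitive one. -/
def TransitiveHom.ofForallFactor (φ : TransitiveHom (CoprodI H) α) (ψ : CoprodI H →* Perm α)
    (h : ∀ i (a : H i), φ.1 (CoprodI.of a) ∈ orbitSubgroup ψ) : TransitiveHom (CoprodI H) α :=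
  ⟨ψ, fun x y => by
    obtain ⟨g, rfl⟩ := φ.2 x y
    exact range_le_orbitSubgroup h ⟨g, rfl⟩ x⟩

open scoped Classical in
/-- The action of the free product that agrees with `φ` on all factors except the `j`-th one,
which acts through `ρ`. -/
noncomputable def updateFactor (φ : CoprodI H →* Perm α) (j : J) (ρ : H j →* Perm α) :
    CoprodI H →* Perm α :=
  CoprodI.lift (Function.update (fun _ => φ.comp CoprodI.of) j ρ)

theorem updateFactor_of_self (φ : CoprodI H →* Perm α) (j : J) (ρ : H j →* Perm α) (a : H j) :
    updateFactor φ j ρ (CoprodI.of a) = ρ a := by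
  simp [updateFactor]

theorem updateFactor_of_ne (φ : CoprodI H →* Perm α) {j : J} (ρ : H j →* Perm α) {i : J}
    (hij : i ≠ j) (a : H i) : updateFactor φ j ρ (CoprodI.of a) = φ (CoprodI.of a) := by
  simp [updateFactor, hij]

/-- The action of the free product in which the action of the `j`-th factor is conjugated by `τ`. -/
noncomputable def conjFactor (φ : CoprodI H →* Perm α) (j : J) (τ : Perm α) :
    CoprodI H →* Perm α :=
  updateFactor φ j ((MulAut.conj τ).toMonoidHom.comp (φ.comp CoprodI.of))

theorem conjFactor_of_self (φ : CoprodI H →* Perm α) (j : J) (τ : Perm α) (a : H j) :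
    conjFactor φ j τ (CoprodI.of a) = τ * φ (CoprodI.of a) * τ⁻¹ := by
  simp [conjFactor, updateFactor_of_self]

theorem conjFactor_of_ne (φ : CoprodI H →* Perm α) {j : J} (τ : Perm α) {i : J} (hij : i ≠ j)
    (a : H i) : conjFactor φ j τ (CoprodI.of a) = φ (CoprodI.of a) :=
  updateFactor_of_ne φ _ hij a

theorem conjFactor_injective (j : J) (τ : Perm α) :
    Function.Injective fun φ : CoprodI H →* Perm α => conjFactor φ j τ := by
  intro φ ψ h
  refine CoprodI.ext_hom _ _ fun i => MonoidHom.ext fun a => ?_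
  have hof := DFunLike.congr_fun h (CoprodI.of a)
  by_cases hij : i = j
  · subst hij
    simpa [conjFactor_of_self] using hof
  · simpa [conjFactor_of_ne _ _ hij] using hof

theorem conjFactor_apply_of_fixed (φ : CoprodI H →* Perm α) (j : J) (τ : Perm α) {i : J} (a : H i)
    {x : α} (hx : τ x = x) (hax : τ (φ (CoprodI.of a) x) = φ (CoprodI.of a) x) :
    conjFactor φ j τ (CoprodI.of a) x = φ (CoprodI.of a) x := by
  by_cases hij : i = j
  · subst hij
    rw [conjFactor_of_self, Perm.mul_apply, Perm.mul_apply, Perm.inv_eq_iff_eq.2 hx.symm, hax]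
  · rw [conjFactor_of_ne _ _ hij]

theorem of_mem_orbitSubgroup_conjFactor {φ : CoprodI H →* Perm α} {j : J} {τ : Perm α}
    (hτ : τ ∈ orbitSubgroup (conjFactor φ j τ)) {i : J} (a : H i) :
    φ (CoprodI.of a) ∈ orbitSubgroup (conjFactor φ j τ) := by
  have hψ := apply_mem_orbitSubgroup (conjFactor φ j τ) (CoprodI.of a)
  by_cases hij : i = j
  · subst hij
    have hφ : φ (CoprodI.of a) = τ⁻¹ * conjFactor φ i τ (CoprodI.of a) * τ := by
      simp [conjFactor_of_self, mul_assoc]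
    exact hφ ▸ mul_mem (mul_mem (inv_mem hτ) hψ) hτ
  · rwa [conjFactor_of_ne _ _ hij] at hψ

end CoprodI

section Paths

variable {J : Type*} {H : J → Type*} [∀ j, Group (H j)] {α : Type*}

/-- The element of the free product spelled by a list of letters, the first letter of the list
being the rightmost factor: under a left action, it is the first letter to act. -/
def pathProd (L : List (Σ i, H i)) : CoprodI H := (L.map fun a => CoprodI.of a.2).reverse.prod

theorem pathProd_nil : pathProd ([] : List (Σ i, H i)) = 1 := rfl

theorem pathProd_cons (a : Σ i, H i) (L : List (Σ i, H i)) :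
    pathProd (a :: L) = pathProd L * CoprodI.of a.2 := by
  simp [pathProd]

theorem conjFactor_pathProd_apply (φ : CoprodI H →* Perm α) (j : J) (τ : Perm α)
    (L : List (Σ i, H i)) (y : α)
    (hτ : ∀ P, P <+: L → τ (φ (pathProd P) y) = φ (pathProd P) y) :
    conjFactor φ j τ (pathProd L) y = φ (pathProd L) y := by
  induction L generalizing y with
  | nil => simp [pathProd_nil]
  | cons a L ih =>
    have hfirst : conjFactor φ j τ (CoprodI.of a.2) y = φ (CoprodI.of a.2) y :=
      conjFactor_apply_of_fixed φ j τ a.2 (by simpa [pathProd_nil] using hτ [] List.nil_prefix)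
        (by simpa [pathProd_cons, pathProd_nil] using hτ [a] ⟨L, rfl⟩)
    have hrest := ih (φ (CoprodI.of a.2) y) fun P hP => by
      simpa [pathProd_cons] using hτ (a :: P) (List.cons_prefix_cons.2 ⟨rfl, hP⟩)
    simpa [pathProd_cons, hfirst] using hrest

variable [Fintype α] [DecidableEq α]

/-- The points whose path under the letters of `L` and then `a` comes back to its starting point
at the end, but not before. -/
noncomputable def firstReturn (φ : CoprodI H →* Perm α) (a : Σ i, H i) (L : List (Σ i, H i)) :
    Finset α :=
  open scoped Classical in
  {z | φ (CoprodI.of a.2 * pathProd L) z = z ∧ ∀ P, P <+: L → P ≠ [] → φ (pathProd P) z ≠ z}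

theorem mem_firstReturn {φ : CoprodI H →* Perm α} {a : Σ i, H i} {L : List (Σ i, H i)} {z : α} :
    z ∈ firstReturn φ a L ↔ φ (CoprodI.of a.2 * pathProd L) z = z ∧
      ∀ P, P <+: L → P ≠ [] → φ (pathProd P) z ≠ z := by
  simp [firstReturn]

theorem conjFactor_swap_apply_of_mem_firstReturn {φ : CoprodI H →* Perm α} {a b : Σ i, H i}
    (hab : a.1 ≠ b.1) {L : List (Σ i, H i)} {z w : α} (hz : z ∈ firstReturn φ a (b :: L))
    (hw : ∀ P, P <+: b :: L → φ (pathProd P) z ≠ w) :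
    conjFactor φ a.1 (Equiv.swap z w) (CoprodI.of a.2 * pathProd (b :: L)) z = w := by
  obtain ⟨hreturn, hfirst⟩ := mem_firstReturn.1 hz
  have swap_fixes (P : List (Σ i, H i)) (hP : P <+: b :: L) (hne : P ≠ []) :
      Equiv.swap z w (φ (pathProd P) z) = φ (pathProd P) z :=
    Equiv.swap_apply_of_ne_of_ne (hfirst P hP hne) (hw P hP)
  have path_eq : conjFactor φ a.1 (Equiv.swap z w) (pathProd (b :: L)) z =
      φ (pathProd (b :: L)) z := by
    have hrest := conjFactor_pathProd_apply φ a.1 (Equiv.swap z w) L (φ (CoprodI.of b.2) z)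
      fun P hP => by
        simpa [pathProd_cons] using
          swap_fixes (b :: P) (List.cons_prefix_cons.2 ⟨rfl, hP⟩) (List.cons_ne_nil _ _)
    simpa [pathProd_cons, conjFactor_of_ne _ _ hab.symm] using hrest
  have swap_last := swap_fixes _ List.prefix_rfl (List.cons_ne_nil _ _)
  rw [map_mul, Perm.mul_apply] at hreturn ⊢
  rw [path_eq, conjFactor_of_self, Perm.mul_apply, Perm.mul_apply, Equiv.swap_inv, swap_last,
    hreturn, Equiv.swap_apply_left]

theorem isNegligible_firstReturn [Finite J] [∀ j, IsCyclic (H j)] {a b : Σ i, H i}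
    (hab : a.1 ≠ b.1) (L : List (Σ i, H i)) :
    IsNegligible fun n (φ : TransitiveHom (CoprodI H) (Fin n)) =>
      #(firstReturn φ.1 a (b :: L)) := by
  refine isNegligible_card_of_exchange _
    (fun n φ z w ψ => ψ.1 = conjFactor φ.1 a.1 (Equiv.swap z w) ∧
      ψ.1 (CoprodI.of a.2 * pathProd (b :: L)) z = w) (L.length + 2) ?_ ?_
  · intro n φ z hz
    refine ⟨((b :: L).inits.map fun P => φ.1 (pathProd P) z).toFinset,
      (List.toFinset_card_le _).trans (by simp), fun w _ hw => ?_⟩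
    have hsurgery := conjFactor_swap_apply_of_mem_firstReturn hab hz (w := w) fun P hP hPw =>
      hw (List.mem_toFinset.2 (List.mem_map.2 ⟨P, (List.mem_inits _ _).2 hP, hPw⟩))
    have hswap := swap_mem_orbitSubgroup ⟨_, hsurgery⟩
    exact ⟨φ.ofForallFactor _ fun i => of_mem_orbitSubgroup_conjFactor hswap, rfl, hsurgery⟩
  · rintro n φ₁ φ₂ z _ _ ψ ⟨h₁, rfl⟩ ⟨h₂, rfl⟩
    exact ⟨Subtype.ext (conjFactor_injective _ _ (h₁.symm.trans h₂)), rfl⟩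

end Paths

section Transversal

theorem exists_transversal_extending {ι α β : Type*} [Fintype ι] [DecidableEq β] {f : α → β}
    {F : Finset α} {d : ℕ} (hd : 0 < d) (hfiber : ∀ x ∈ F, #{y ∈ F | f y = f x} ≤ d)
    (hF : d * Fintype.card ι ≤ #F) {i₀ i₁ : ι} (hi : i₀ ≠ i₁) {z w : α} (hz : z ∈ F) (hw : w ∈ F)
    (hzw : f z ≠ f w) :
    ∃ X : ι → α, X i₀ = z ∧ X i₁ = w ∧ (∀ i, X i ∈ F) ∧ Function.Injective (f ∘ X) := by
  classical
  have hcard : Fintype.card ι ≤ #(F.image f) := by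
    refine Nat.le_of_mul_le_mul_left (hF.trans (Finset.card_le_mul_card_image F d ?_)) hd
    simpa using hfiber
  obtain ⟨V, hzwV, hVF, hVcard⟩ :=
    Finset.exists_subsuperset_card_eq (s := {f z, f w}) (t := F.image f) (n := Fintype.card ι)
      (by simp [Finset.insert_subset_iff, Finset.mem_image_of_mem f, hz, hw])
      ((Finset.card_pair hzw).trans_le (Fintype.one_lt_card_iff.2 ⟨i₀, i₁, hi⟩)) hcard
  obtain ⟨e, he⟩ := Finset.exists_equiv_extend_of_card_eq hVcard.symm (s := {i₀, i₁})
    (f := fun i => if i = i₀ then f z else f w)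
    (by simpa [Finset.insert_subset_iff, Finset.image_insert, hi.symm] using hzwV)
    (by simp [Set.InjOn, hi.symm, hzw, hzw.symm])
  have hlift (i : ι) : ∃ x ∈ F, f x = e i ∧ (i = i₀ → x = z) ∧ (i = i₁ → x = w) := by
    by_cases h₀ : i = i₀
    · exact ⟨z, hz, by simp [h₀, he], by simp, fun h₁ => absurd (h₀.symm.trans h₁) hi⟩
    by_cases h₁ : i = i₁
    · exact ⟨w, hw, by simp [h₁, he, hi.symm], fun h => absurd h h₀, by simp⟩
    · obtain ⟨x, hx, hxe⟩ := Finset.mem_image.1 (hVF (e i).2)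
      exact ⟨x, hx, hxe, fun h => absurd h h₀, fun h => absurd h h₁⟩
  choose X hXF hXe hX₀ hX₁ using hlift
  refine ⟨X, hX₀ i₀ rfl, hX₁ i₁ rfl, hXF, fun i l hil => e.injective (Subtype.ext ?_)⟩
  rw [← hXe, ← hXe]
  exact hil

end Transversal

section MergeCycles

variable {α : Type*}

theorem card_cycle_le [Fintype α] [DecidableEq α] (s : Perm α) (x : α) :
    #{y | s.SameCycle x y} ≤ MulAction.period s x := by
  calc #{y | s.SameCycle x y}
      ≤ #((Finset.range (MulAction.period s x)).image fun t => (s ^ t) x) := by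
        refine Finset.card_le_card fun y hy => ?_
        obtain ⟨t, rfl⟩ := ((Finset.mem_filter_univ y).1 hy).exists_nat_pow_eq
        refine Finset.mem_image.2 ⟨t % MulAction.period s x, ?_, ?_⟩
        · exact Finset.mem_range.2 (Nat.mod_lt _ (MulAction.period_pos_of_orderOf_pos
            (orderOf_pos s) x))
        · exact MulAction.pow_mod_period_smul (m := s) (a := x) t
    _ ≤ MulAction.period s x := Finset.card_image_le.trans (Finset.card_range _).le

/-- `X` lists points of period `d` that lie in pairwise different cycles of `s`. -/
structure IsCycleTransversal {ι : Type*} (s : Perm α) (d : ℕ) (X : ι → α) : Prop where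
  period_eq (i : ι) : MulAction.period s (X i) = d
  eq_of_sameCycle {i j : ι} (h : s.SameCycle (X i) (X j)) : i = j

variable {k : ℕ}

/-- The permutation obtained from `s` by redirecting `X i` to the image of `X (i + 1)`. If the `X i`
have the same period and lie in different cycles of `s`, then it joins these cycles into one. -/
noncomputable def mergeCycles (s : Perm α) (X : ZMod k ↪ α) : Perm α :=
  s * (Equiv.addRight (1 : ZMod k)).viaEmbedding X

theorem mergeCycles_apply (s : Perm α) (X : ZMod k ↪ α) (i : ZMod k) :
    mergeCycles s X (X i) = s (X (i + 1)) := by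
  simp [mergeCycles, Perm.viaEmbedding_apply]

theorem mergeCycles_apply_of_notMem (s : Perm α) (X : ZMod k ↪ α) {y : α} (hy : y ∉ Set.range X) :
    mergeCycles s X y = s y := by
  simp [mergeCycles, Perm.viaEmbedding_apply_of_notMem _ _ _ hy]

theorem mergeCycles_left_injective (X : ZMod k ↪ α) :
    Function.Injective fun s : Perm α => mergeCycles s X :=
  mul_left_injective _

variable {s : Perm α} {d : ℕ} {X : ZMod k ↪ α}

theorem IsCycleTransversal.pow_apply_notMem (hX : IsCycleTransversal s d X)
    {i : ZMod k} {t : ℕ} (ht : t ≠ 0) (htd : t < d) :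
    (s ^ t) (X i) ∉ Set.range X := by
  rintro ⟨l, hl⟩
  obtain rfl : i = l := hX.eq_of_sameCycle ⟨t, by simpa using hl.symm⟩
  have hdvd := (MulAction.pow_smul_eq_iff_period_dvd (m := s) (a := X i)).1 hl.symm
  rw [hX.period_eq] at hdvd
  exact ht (Nat.eq_zero_of_dvd_of_lt hdvd htd)

theorem IsCycleTransversal.mergeCycles_pow_succ_apply (hX : IsCycleTransversal s d X)
    (i : ZMod k) {t : ℕ} (ht : t < d) :
    (mergeCycles s X ^ (t + 1)) (X i) = (s ^ (t + 1)) (X (i + 1)) := by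
  induction t with
  | zero => simpa using mergeCycles_apply s X i
  | succ t ih =>
    rw [pow_succ', Perm.mul_apply, ih (by omega),
      mergeCycles_apply_of_notMem _ _ (hX.pow_apply_notMem t.succ_ne_zero ht), ← Perm.mul_apply,
      ← pow_succ']

theorem IsCycleTransversal.mergeCycles_pow_apply (hX : IsCycleTransversal s d X)
    (hd : 0 < d) (i : ZMod k) :
    (mergeCycles s X ^ d) (X i) = X (i + 1) := by
  obtain ⟨t, rfl⟩ := Nat.exists_eq_succ_of_ne_zero hd.ne'
  have hperiod := MulAction.pow_period_smul s (X (i + 1))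
  rw [hX.period_eq] at hperiod
  exact (hX.mergeCycles_pow_succ_apply i t.lt_succ_self).trans hperiod

theorem IsCycleTransversal.mergeCycles_pow_mul_apply (hX : IsCycleTransversal s d X)
    (hd : 0 < d) (i : ZMod k) (l : ℕ) :
    (mergeCycles s X ^ (d * l)) (X i) = X (i + l) := by
  induction l with
  | zero => simp
  | succ l ih =>
    rw [mul_add_one, add_comm, pow_add, Perm.mul_apply, ih, hX.mergeCycles_pow_apply hd]
    push_cast
    rw [add_assoc]

theorem IsCycleTransversal.mergeCycles_pow_eq_one (hX : IsCycleTransversal s d X)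
    (hd : 0 < d) {N : ℕ} (hN : d * k ∣ N)
    (hs : s ^ N = 1) : mergeCycles s X ^ N = 1 := by
  obtain ⟨l, rfl⟩ := hN
  refine Perm.ext fun y => ?_
  by_cases hy : ∃ t : ℕ, (mergeCycles s X ^ t) y ∈ Set.range X
  · obtain ⟨t, i, hi⟩ := hy
    apply (mergeCycles s X ^ t).injective
    rw [← Perm.mul_apply, (Commute.pow_pow_self _ _ _).eq, Perm.mul_apply, ← hi, mul_assoc,
      hX.mergeCycles_pow_mul_apply hd]
    simp [hi]
  · have pow_eq (t : ℕ) : (mergeCycles s X ^ t) y = (s ^ t) y := by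
      induction t with
      | zero => rfl
      | succ t ih =>
        rw [pow_succ', Perm.mul_apply, mergeCycles_apply_of_notMem _ _ fun h => hy ⟨t, h⟩, ih,
          pow_succ', Perm.mul_apply]
    rw [pow_eq, hs]

theorem IsCycleTransversal.mergeCycles_sameCycle (hX : IsCycleTransversal s d X)
    (hd : 0 < d) (y : α) :
    (mergeCycles s X).SameCycle y (s y) := by
  by_cases hy : y ∈ Set.range X
  · obtain ⟨i, rfl⟩ := hy
    have hback : (mergeCycles s X).SameCycle (X i) (X (i - 1)) :=
      Perm.SameCycle.symm ⟨d, by simpa using hX.mergeCycles_pow_apply hd (i - 1)⟩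
    exact hback.trans ⟨1, by simpa using mergeCycles_apply s X (i - 1)⟩
  · exact ⟨1, by simpa using mergeCycles_apply_of_notMem s X hy⟩

theorem exists_isCycleTransversal [Finite α] {F : Finset α} {z w : α}
    (hF : ∀ x ∈ F, MulAction.period s x = d) (hd : 0 < d) (hk : 2 ≤ k) (hcard : d * k ≤ #F)
    (hz : z ∈ F) (hw : w ∈ F) (hzw : ¬ s.SameCycle z w) :
    ∃ X : ZMod k ↪ α, X 0 = z ∧ X 1 = w ∧ IsCycleTransversal s d X := by
  classical
  let := Fintype.ofFinite α
  have : Fact (1 < k) := ⟨hk⟩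
  have : NeZero k := ⟨by omega⟩
  let cycle : α → Quotient (Perm.SameCycle.setoid s) := Quotient.mk _
  have cycle_eq {x y : α} : cycle x = cycle y ↔ s.SameCycle x y := Quotient.eq
  have hfiber (x : α) (hx : x ∈ F) : #{y ∈ F | cycle y = cycle x} ≤ d := by
    refine le_trans (Finset.card_le_card fun y hy => ?_) ((card_cycle_le s x).trans_eq (hF x hx))
    exact (Finset.mem_filter_univ y).2 (cycle_eq.1 (Finset.mem_filter.1 hy).2).symm
  obtain ⟨X, h₀, h₁, hXF, hinj⟩ := exists_transversal_extending (ι := ZMod k) hd hfiber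
    (by rwa [ZMod.card]) zero_ne_one hz hw (mt cycle_eq.1 hzw)
  exact ⟨⟨X, hinj.of_comp⟩, h₀, h₁, fun i => hF _ (hXF i), fun h => hinj (cycle_eq.2 h)⟩

theorem zmodEmbedding_eq_of_step {X Y : ZMod k ↪ α} [NeZero k] {f : α → α} (h₀ : X 0 = Y 0)
    (hX : ∀ i, f (X i) = X (i + 1)) (hY : ∀ i, f (Y i) = Y (i + 1)) : X = Y := by
  have natCast_eq (l : ℕ) : X l = Y l := by
    induction l with
    | zero => simpa using h₀
    | succ l ih => rw [Nat.cast_succ, ← hX, ← hY, ih]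
  ext i
  simpa using natCast_eq i.val

end MergeCycles

section CyclicFactor

variable {J : Type*} {H : J → Type*} [∀ j, Group (H j)] {α : Type*}

theorem eq_of_forall_factor_ne {j : J} {c : H j} (hc : ∀ x, x ∈ Subgroup.zpowers c)
    {φ ψ : CoprodI H →* Perm α} (hφψ : φ (CoprodI.of c) = ψ (CoprodI.of c))
    (hne : ∀ i ≠ j, ∀ a : H i, φ (CoprodI.of a) = ψ (CoprodI.of a)) : φ = ψ := by
  refine CoprodI.ext_hom _ _ fun i => ?_
  by_cases hij : i = j
  · subst hij
    exact (MonoidHom.eq_iff_eq_on_generator hc _ _).2 hφψ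
  · exact MonoidHom.ext (hne i hij)

theorem exists_transitiveHom_replacing_generator {j : J} {c : H j}
    (hc : ∀ x, x ∈ Subgroup.zpowers c) (φ : TransitiveHom (CoprodI H) α) {s : Perm α}
    (hs : s ^ orderOf c = 1) (hcycle : ∀ y, s.SameCycle y (φ.1 (CoprodI.of c) y)) :
    ∃ ψ : TransitiveHom (CoprodI H) α, ψ.1 (CoprodI.of c) = s ∧
      ∀ i ≠ j, ∀ a : H i, ψ.1 (CoprodI.of a) = φ.1 (CoprodI.of a) := by
  let ρ : H j →* Perm α := monoidHomOfForallMemZpowers hc (orderOf_dvd_of_pow_eq_one hs)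
  let ψ := updateFactor φ.1 j ρ
  have hψc : ψ (CoprodI.of c) = s :=
    (updateFactor_of_self _ _ _ _).trans (monoidHomOfForallMemZpowers_apply_gen hc _)
  have hψne (i : J) (hij : i ≠ j) (a : H i) : ψ (CoprodI.of a) = φ.1 (CoprodI.of a) :=
    updateFactor_of_ne _ _ hij a
  have hφc : φ.1 (CoprodI.of c) ∈ orbitSubgroup ψ := fun y => by
    obtain ⟨e, he⟩ := hcycle y
    exact ⟨CoprodI.of c ^ e, by rw [map_zpow, hψc, he]⟩
  refine ⟨φ.ofForallFactor ψ fun i a => ?_, hψc, hψne⟩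
  by_cases hij : i = j
  · subst hij
    obtain ⟨e, rfl⟩ := Subgroup.mem_zpowers_iff.1 (hc a)
    simpa using zpow_mem hφc e
  · exact hψne i hij a ▸ apply_mem_orbitSubgroup ψ _

/-- The action `ψ` arises from `φ` by merging the `k` cycles of the generator `c` of the `j`-th
factor through the points of some `X`, where `X 0 = z` and `X 1 = w`. The `d`-th power of the new
permutation runs through `X`, so that `X` can be recovered from `ψ` and `z`. -/
def IsMergeAt {j : J} (c : H j) (d k : ℕ) (φ : CoprodI H →* Perm α) (z w : α)
    (ψ : CoprodI H →* Perm α) : Prop :=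
  ∃ X : ZMod k ↪ α, X 0 = z ∧ X 1 = w ∧
    (∀ i, (ψ (CoprodI.of c) ^ d) (X i) = X (i + 1)) ∧
    ψ (CoprodI.of c) = mergeCycles (φ (CoprodI.of c)) X ∧
    ∀ i ≠ j, ∀ a : H i, ψ (CoprodI.of a) = φ (CoprodI.of a)

theorem IsMergeAt.unique {j : J} {c : H j} (hc : ∀ x, x ∈ Subgroup.zpowers c) {d k : ℕ} [NeZero k]
    {φ₁ φ₂ ψ : CoprodI H →* Perm α} {z w₁ w₂ : α} (h₁ : IsMergeAt c d k φ₁ z w₁ ψ)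
    (h₂ : IsMergeAt c d k φ₂ z w₂ ψ) : φ₁ = φ₂ ∧ w₁ = w₂ := by
  obtain ⟨X, hX₀, rfl, hXstep, hXc, hXne⟩ := h₁
  obtain ⟨Y, hY₀, rfl, hYstep, hYc, hYne⟩ := h₂
  obtain rfl := zmodEmbedding_eq_of_step (hX₀.trans hY₀.symm) hXstep hYstep
  have hφc := mergeCycles_left_injective X (hXc.symm.trans hYc)
  exact ⟨eq_of_forall_factor_ne hc hφc fun i hij a => (hXne i hij a).symm.trans (hYne i hij a), rfl⟩

theorem exists_isMergeAt [Finite α] {j : J} {c : H j}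
    (hc : ∀ x, x ∈ Subgroup.zpowers c) {d k : ℕ} (hd : 0 < d) (hk : 2 ≤ k)
    (hdk : d * k ∣ orderOf c) (φ : TransitiveHom (CoprodI H) α) {F : Finset α}
    (hF : ∀ x ∈ F, MulAction.period (φ.1 (CoprodI.of c)) x = d) (hcard : d * k ≤ #F)
    {z w : α} (hz : z ∈ F) (hw : w ∈ F) (hzw : ¬ (φ.1 (CoprodI.of c)).SameCycle z w) :
    ∃ ψ : TransitiveHom (CoprodI H) α, IsMergeAt c d k φ.1 z w ψ.1 := by
  obtain ⟨X, h₀, h₁, hX⟩ := exists_isCycleTransversal hF hd hk hcard hz hw hzw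
  have hmerge : mergeCycles (φ.1 (CoprodI.of c)) X ^ orderOf c = 1 :=
    hX.mergeCycles_pow_eq_one hd hdk (by simp [← map_pow, pow_orderOf_eq_one])
  obtain ⟨ψ, hψc, hψne⟩ :=
    exists_transitiveHom_replacing_generator hc φ hmerge (hX.mergeCycles_sameCycle hd)
  exact ⟨ψ, X, h₀, h₁, hψc ▸ hX.mergeCycles_pow_apply hd, hψc, hψne⟩

theorem isNegligible_period_eq [Finite J] [∀ j, IsCyclic (H j)] {j : J} {c : H j}
    (hc : ∀ x, x ∈ Subgroup.zpowers c) {d k : ℕ} (hd : 0 < d) (hk : 2 ≤ k)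
    (hdk : d * k ∣ orderOf c) :
    IsNegligible fun n (φ : TransitiveHom (CoprodI H) (Fin n)) =>
      #{x : Fin n | MulAction.period (φ.1 (CoprodI.of c)) x = d} := by
  have : NeZero k := ⟨by omega⟩
  refine isNegligible_card_of_exchange _ (fun n φ z w ψ => IsMergeAt c d k φ.1 z w ψ.1) (d * k)
    (fun n φ z hz => ?_) fun n φ₁ φ₂ z w₁ w₂ ψ h₁ h₂ =>
      (IsMergeAt.unique hc h₁ h₂).imp_left Subtype.ext
  set F : Finset (Fin n) := {x | MulAction.period (φ.1 (CoprodI.of c)) x = d}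
  have hF (x : Fin n) (hx : x ∈ F) : MulAction.period (φ.1 (CoprodI.of c)) x = d :=
    (Finset.mem_filter_univ x).1 hx
  rcases lt_or_ge #F (d * k) with hsmall | hlarge
  · exact ⟨F, hsmall.le, fun w hw hwF => absurd hw hwF⟩
  · have hcycle_le : #{w | (φ.1 (CoprodI.of c)).SameCycle z w} ≤ d * k :=
      ((card_cycle_le _ z).trans_eq (hF z hz)).trans (Nat.le_mul_of_pos_right d (by omega))
    exact ⟨_, hcycle_le, fun w hw hwB =>
      exists_isMergeAt hc hd hk hdk φ hF hlarge hz hw (by simpa using hwB)⟩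

end CyclicFactor

section FixedPoints

/-- The average number of fixed points of `g` over all transitive actions of `G` on `n` points is
`o(n)`. -/
def FixesFewPoints {G : Type*} [Group G] [∀ n, Finite (G →* Perm (Fin n))] (g : G) : Prop :=
  IsNegligible fun n (φ : TransitiveHom G (Fin n)) => #{x | φ.1 g x = x}

theorem FixesFewPoints.mul_comm {G : Type*} [Group G] [∀ n, Finite (G →* Perm (Fin n))] {g k : G}
    (h : FixesFewPoints (g * k)) : FixesFewPoints (k * g) := by
  refine IsNegligible.mono h fun n φ => ?_
  refine Finset.card_le_card_of_injOn (φ.1 g) (fun x hx => ?_) (φ.1 g).injective.injOn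
  simpa using hx

theorem exists_two_le_mul_dvd {d N : ℕ} (hdvd : d ∣ N) (hne : d ≠ N) : ∃ k, 2 ≤ k ∧ d * k ∣ N := by
  obtain ⟨k, rfl⟩ := hdvd
  rcases k with _ | _ | k
  · exact ⟨2, le_rfl, by simp⟩
  · simp at hne
  · exact ⟨k + 2, by omega, dvd_rfl⟩

variable {J : Type*} {H : J → Type*} [∀ j, Group (H j)]

theorem card_fixed_le_firstReturn_add {α : Type*} [Fintype α] [DecidableEq α]
    [DecidableEq (List (Σ j, H j))]
    (φ : CoprodI H →* Perm α) (a : Σ j, H j) (L : List (Σ j, H j)) :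
    #{x | φ (CoprodI.of a.2 * pathProd L) x = x} ≤ #(firstReturn φ a L) +
      ∑ P ∈ L.inits.toFinset.erase [], #{x | φ (pathProd P) x = x} := by
  refine (Finset.card_le_card fun x hx => ?_).trans ((Finset.card_union_le _ _).trans
    (Nat.add_le_add_left Finset.card_biUnion_le _))
  by_cases hx' : x ∈ firstReturn φ a L
  · exact Finset.mem_union_left _ hx'
  · simp only [mem_firstReturn, not_and, not_forall, not_not] at hx'
    obtain ⟨P, hPL, hPne, hPx⟩ := hx' (Finset.mem_filter.1 hx).2
    refine Finset.mem_union_right _ (Finset.mem_biUnion.2 ⟨P, ?_, by simpa using hPx⟩)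
    rw [Finset.mem_erase, List.mem_toFinset, List.mem_inits]
    exact ⟨hPne, hPL⟩

theorem exists_word_pathProd_eq (g : CoprodI H) : ∃ w : CoprodI.Word H, pathProd w.toList = g := by
  classical
  obtain ⟨w, rfl⟩ := (CoprodI.Word.equiv (M := H)).symm.surjective g
  have hchain : w.toList.reverse.IsChain fun a b => a.1 ≠ b.1 :=
    List.isChain_reverse.2 (w.chain_ne.imp fun _ _ => Ne.symm)
  refine ⟨⟨w.toList.reverse, by simpa using w.ne_one, hchain⟩, ?_⟩
  simp [pathProd, CoprodI.Word.equiv, CoprodI.Word.prod]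

variable [Finite J] [∀ j, IsCyclic (H j)]

theorem fixesFewPoints_of {j : J} {a : H j} (ha : a ≠ 1) : FixesFewPoints (CoprodI.of a) := by
  obtain ⟨c, hc⟩ := IsCyclic.exists_generator (α := H j)
  obtain ⟨e, rfl⟩ := Subgroup.mem_zpowers_iff.1 (hc a)
  have hce : ¬ orderOf c ∣ e.natAbs := by
    rwa [← Int.natCast_dvd, orderOf_dvd_iff_zpow_eq_one]
  let periods : Finset ℕ := {d ∈ e.natAbs.divisors | d ∣ orderOf c}
  have hperiods : ∀ d ∈ periods, IsNegligible fun n (φ : TransitiveHom (CoprodI H) (Fin n)) =>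
      #{x : Fin n | MulAction.period (φ.1 (CoprodI.of c)) x = d} := by
    intro d hd
    obtain ⟨hde, hdc⟩ := Finset.mem_filter.1 hd
    have hdvd := Nat.dvd_of_mem_divisors hde
    obtain ⟨k, hk, hdk⟩ := exists_two_le_mul_dvd hdc fun h => hce (h ▸ hdvd)
    exact isNegligible_period_eq hc (Nat.pos_of_mem_divisors hde) hk hdk
  refine (isNegligible_sum hperiods).mono fun n φ => ?_
  refine (Finset.card_le_card fun x hx => ?_).trans Finset.card_biUnion_le
  have hperiod_e : MulAction.period (φ.1 (CoprodI.of c)) x ∣ e.natAbs :=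
    Int.natCast_dvd.1 (MulAction.zpow_smul_eq_iff_period_dvd.1 (by simpa using hx))
  have hperiod_c : MulAction.period (φ.1 (CoprodI.of c)) x ∣ orderOf c :=
    (MulAction.period_dvd_orderOf _ x).trans (orderOf_map_dvd (φ.1.comp CoprodI.of) c)
  have he : e.natAbs ≠ 0 := fun h => hce (h ▸ dvd_zero _)
  simpa [periods] using ⟨⟨hperiod_e, by simpa using he⟩, hperiod_c⟩

theorem fixesFewPoints_pathProd (w : CoprodI.Word H) (hw : w.toList ≠ []) :
    FixesFewPoints (pathProd w.toList) := by
  classical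
  obtain ⟨L, hL_one, hL_chain⟩ := w
  induction hlen : L.length using Nat.strong_induction_on generalizing L with
  | _ l ih =>
    rcases L with _ | ⟨a, _ | ⟨b, L⟩⟩
    · exact absurd rfl hw
    · simpa [pathProd_cons, pathProd_nil] using fixesFewPoints_of (hL_one a (by simp))
    · rw [pathProd_cons]
      have hprefix : ∀ P ∈ (b :: L).inits.toFinset.erase [], FixesFewPoints (pathProd P) := by
        intro P hP
        rw [Finset.mem_erase, List.mem_toFinset, List.mem_inits] at hP
        obtain ⟨hPne, hPL⟩ := hP
        refine ih P.length ?_ P (fun c hc => ?_) (hL_chain.of_cons.prefix hPL) hPne rfl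
        · exact hlen ▸ Nat.lt_succ_of_le hPL.length_le
        · exact hL_one c (List.mem_cons_of_mem _ (hPL.subset hc))
      have hreturn := isNegligible_firstReturn (List.isChain_cons_cons.1 hL_chain).1 L
      exact FixesFewPoints.mul_comm <| (hreturn.add (isNegligible_sum hprefix)).mono fun n φ =>
        card_fixed_le_firstReturn_add φ.1 a (b :: L)

theorem fixesFewPoints_of_ne_one {g : CoprodI H} (hg : g ≠ 1) : FixesFewPoints g := by
  obtain ⟨w, rfl⟩ := exists_word_pathProd_eq g
  exact fixesFewPoints_pathProd w fun hw => hg (by rw [hw, pathProd_nil])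

end FixedPoints

section SubgroupAverage

variable {G α : Type*} [Group G]

/-- The transitive action of `G` on `α` obtained by labelling the cosets of `H` by `α`. -/
def cosetHom {H : Subgroup G} (e : G ⧸ H ≃ α) : TransitiveHom G α :=
  ⟨e.permCongrHom.toMonoidHom.comp (MulAction.toPermHom G (G ⧸ H)), fun x y => by
    obtain ⟨g, hg⟩ := MulAction.exists_smul_eq G (e.symm x) (e.symm y)
    exact ⟨g, by simp [hg]⟩⟩

theorem cosetHom_apply {H : Subgroup G} (e : G ⧸ H ≃ α) (g : G) (x : G ⧸ H) :
    (cosetHom e).1 g (e x) = e (g • x) := by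
  simp [cosetHom]

theorem cosetHom_apply_one {H : Subgroup G} (e : G ⧸ H ≃ α) (g : G) :
    (cosetHom e).1 g (e (1 : G)) = e (g : G ⧸ H) := by
  rw [cosetHom_apply, MulAction.Quotient.smul_coe, smul_eq_mul, mul_one]

theorem exists_cosetHom_eq (φ : TransitiveHom G α) (x : α) :
    ∃ (H : Subgroup G) (e : G ⧸ H ≃ α), cosetHom e = φ ∧ e (1 : G) = x := by
  let : MulAction G α := MulAction.compHom α φ.1
  have : MulAction.IsPretransitive G α := ⟨φ.2⟩
  let e : G ⧸ MulAction.stabilizer G x ≃ α :=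
    .ofBijective (MulAction.ofQuotientStabilizer G x)
      ⟨MulAction.injective_ofQuotientStabilizer G x, fun y =>
        (MulAction.exists_smul_eq G x y).imp' QuotientGroup.mk fun _ => id⟩
  have e_coe (g : G) : e g = g • x := MulAction.ofQuotientStabilizer_mk G x g
  refine ⟨_, e, Subtype.ext <| MonoidHom.ext fun g => Perm.ext fun y => ?_, by simp [e_coe]⟩
  obtain ⟨k, rfl⟩ := MulAction.exists_smul_eq G x y
  rw [← e_coe, cosetHom_apply, MulAction.Quotient.smul_coe, e_coe, e_coe, smul_eq_mul, mul_smul]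
  rfl

/-- A subgroup together with a labelling of its cosets is the same as a transitive action together
with a base point, the label of the trivial coset. -/
noncomputable def labelledSubgroupEquiv :
    (Σ H : Subgroup G, G ⧸ H ≃ α) ≃ TransitiveHom G α × α :=
  Equiv.ofBijective (fun He => (cosetHom He.2, He.2 (1 : G))) <| by
    refine ⟨?_, fun ⟨φ, x⟩ => ?_⟩
    · rintro ⟨H, e⟩ ⟨K, e'⟩ h
      obtain ⟨hφ, hx⟩ := Prod.mk.inj h
      have coe_eq (g : G) : e (g : G ⧸ H) = e' (g : G ⧸ K) := by
        rw [← cosetHom_apply_one, hφ, hx, cosetHom_apply_one]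
      obtain rfl : H = K := by
        ext g
        simpa [coe_eq, QuotientGroup.eq] using (e.apply_eq_iff_eq (x := (1 : G)) (y := g)).symm
      exact congrArg _ (Equiv.ext fun x => QuotientGroup.induction_on x coe_eq)
    · obtain ⟨H, e, rfl, rfl⟩ := exists_cosetHom_eq φ x
      exact ⟨⟨H, e⟩, rfl⟩

theorem fixedCosetCount_eq [Fintype α] [DecidableEq α] {H : Subgroup G} (e : G ⧸ H ≃ α) (g : G) :
    fixedCosetCount g H = #{x | (cosetHom e).1 g x = x} := by
  have hfix (x : G ⧸ H) : g • x = x ↔ (cosetHom e).1 g (e x) = e x := by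
    rw [cosetHom_apply, e.apply_eq_iff_eq]
  rw [fixedCosetCount, Nat.card_congr (e.subtypeEquiv (q := fun y => (cosetHom e).1 g y = y) hfix),
    Nat.card_eq_fintype_card, Fintype.card_subtype]

variable {n : ℕ}

theorem nonempty_quotient_equiv_fin_iff (hn : n ≠ 0) {H : Subgroup G} :
    Nonempty (G ⧸ H ≃ Fin n) ↔ H.index = n := by
  refine ⟨fun ⟨e⟩ => (Nat.card_congr e).trans (Nat.card_fin n), fun h => ?_⟩
  have : Finite (G ⧸ H) := Nat.finite_of_card_ne_zero (ne_of_eq_of_ne h hn)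
  exact ⟨Finite.equivFinOfCardEq h⟩

theorem card_quotient_equiv_fin {H : Subgroup G} (e : G ⧸ H ≃ Fin n)
    [Fintype (G ⧸ H ≃ Fin n)] : Fintype.card (G ⧸ H ≃ Fin n) = n.factorial := by
  rw [Fintype.card_congr (e.equivCongr (.refl _)), Fintype.card_perm, Fintype.card_fin]

variable [Finite (G →* Perm (Fin n))]

theorem finite_subgroup_index_eq (hn : n ≠ 0) : Finite {H : Subgroup G // H.index = n} := by
  have : Finite (Σ H : Subgroup G, G ⧸ H ≃ Fin n) := .of_equiv _ labelledSubgroupEquiv.symm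
  refine Finite.of_injective (fun H : {H : Subgroup G // H.index = n} =>
    (⟨H.1, ((nonempty_quotient_equiv_fin_iff hn).2 H.2).some⟩ : Σ H : Subgroup G, G ⧸ H ≃ Fin n)) ?_
  exact fun H K h => Subtype.ext (congrArg Sigma.fst h)

theorem factorial_mul_tsum_subgroup (hn : n ≠ 0) {f : Subgroup G → ℝ}
    {F : TransitiveHom G (Fin n) → ℝ}
    (hF : ∀ (H : Subgroup G) (e : G ⧸ H ≃ Fin n), F (cosetHom e) = f H) :
    n.factorial * ∑' H : {H : Subgroup G // H.index = n}, f H.1 = n * ∑ φ, F φ := by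
  have := finite_subgroup_index_eq (G := G) hn
  let := Fintype.ofFinite {H : Subgroup G // H.index = n}
  let (H : Subgroup G) : Fintype (G ⧸ H ≃ Fin n) := Fintype.ofFinite _
  let pointed : (Σ H : {H : Subgroup G // H.index = n}, G ⧸ H.1 ≃ Fin n) ≃
      TransitiveHom G (Fin n) × Fin n :=
    (Equiv.sigmaSubtypeEquivOfSubset _ _ fun _ e =>
      (nonempty_quotient_equiv_fin_iff hn).1 ⟨e⟩).trans labelledSubgroupEquiv
  have card_labellings (H : {H : Subgroup G // H.index = n}) :
      Fintype.card (G ⧸ H.1 ≃ Fin n) = n.factorial :=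
    card_quotient_equiv_fin ((nonempty_quotient_equiv_fin_iff hn).2 H.2).some
  calc n.factorial * ∑' H : {H : Subgroup G // H.index = n}, f H.1
      = ∑ H : {H : Subgroup G // H.index = n}, ∑ _e : G ⧸ H.1 ≃ Fin n, f H.1 := by
        simp [tsum_fintype, card_labellings, Finset.mul_sum]
    _ = ∑ He : Σ H : {H : Subgroup G // H.index = n}, G ⧸ H.1 ≃ Fin n, f He.1.1 :=
        (Fintype.sum_sigma' _).symm
    _ = ∑ φx : TransitiveHom G (Fin n) × Fin n, F φx.1 :=
        Fintype.sum_equiv pointed _ _ fun He => (hF _ He.2).symm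
    _ = n * ∑ φ, F φ := by simp [Fintype.sum_prod_type, Finset.mul_sum]

theorem subgroupExp_fixedCosetCount (hn : n ≠ 0) (g : G) :
    subgroupExp G n (fun H => (fixedCosetCount g H : ℝ)) =
      (∑ φ : TransitiveHom G (Fin n), (#{x | φ.1 g x = x} : ℝ)) /
        Fintype.card (TransitiveHom G (Fin n)) := by
  have hfix := factorial_mul_tsum_subgroup hn (f := fun H => (fixedCosetCount g H : ℝ))
    (F := fun φ => (#{x | φ.1 g x = x} : ℝ)) fun H e => by rw [fixedCosetCount_eq e g]
  have hcard := factorial_mul_tsum_subgroup (G := G) hn (f := fun _ => 1) (F := fun _ => 1)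
    fun _ _ => rfl
  have := finite_subgroup_index_eq (G := G) hn
  let := Fintype.ofFinite {H : Subgroup G // H.index = n}
  simp only [tsum_fintype, Finset.sum_const, Finset.card_univ, nsmul_eq_mul, mul_one] at hfix hcard
  have hn' : (n : ℝ) ≠ 0 := Nat.cast_ne_zero.2 hn
  have hfact : (n.factorial : ℝ) ≠ 0 := Nat.cast_ne_zero.2 n.factorial_ne_zero
  rw [subgroupExp, tsum_fintype, Nat.card_eq_fintype_card, ← mul_div_mul_left _ _ hfact, hfix,
    hcard, mul_div_mul_left _ _ hn']

theorem FixesFewPoints.subgroupExp_isLittleO [∀ n, Finite (G →* Perm (Fin n))] {g : G}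
    (hg : FixesFewPoints g) :
    (fun n : ℕ => subgroupExp G n fun H => (fixedCosetCount g H : ℝ)) =o[atTop]
      fun n : ℕ => (n : ℝ) :=
  hg.average_isLittleO.congr' ((eventually_ne_atTop 0).mono fun _ hn =>
    (subgroupExp_fixedCosetCount hn g).symm) .rfl

end SubgroupAverage

section General

theorem FixesFewPoints.of_mulEquiv {G G' : Type*} [Group G] [Group G']
    [∀ n, Finite (G →* Perm (Fin n))] [∀ n, Finite (G' →* Perm (Fin n))] (e : G ≃* G') {g : G}
    (hg : FixesFewPoints (e g)) : FixesFewPoints g := by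
  let pullback (n : ℕ) : TransitiveHom G' (Fin n) ≃ TransitiveHom G (Fin n) :=
    e.symm.monoidHomCongrLeftEquiv.subtypeEquiv fun φ => forall₂_congr fun x y =>
      e.symm.surjective.exists.trans (by simp) |>.symm
  refine hg.congr (fun n => ?_) fun n => ?_
  · exact Fintype.sum_equiv (pullback n) _ _ fun φ => by simp [pullback]
  · rw [Fintype.card_congr (pullback n)]

theorem irs_limit_fuchsian_general {J : Type*} [Finite J] {H : J → Type*} [∀ j, Group (H j)]
    [∀ j, IsCyclic (H j)] {G : Type*} [Group G] [Infinite G] (e : G ≃* CoprodI H) {g : G}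
    (hg : g ≠ 1) :
    (fun n : ℕ => subgroupExp G n fun K => (fixedCosetCount g K : ℝ)) =o[atTop]
      fun n : ℕ => (n : ℝ) := by
  have (n : ℕ) : Finite (G →* Perm (Fin n)) := .of_equiv _ e.symm.monoidHomCongrLeftEquiv
  have hg' : e g ≠ 1 := (map_ne_one_iff e e.injective).2 hg
  exact ((fixesFewPoints_of_ne_one hg').of_mulEquiv e).subgroupExp_isLittleO

end General

section InfiniteCoprodI

variable {J : Type*} {H : J → Type*} [∀ j, Group (H j)]

theorem neWord_prod_ne_one {i j : J} (w : CoprodI.NeWord H i j) : w.prod ≠ 1 := by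
  classical
  intro hw
  have hempty : w.toWord = CoprodI.Word.empty :=
    CoprodI.Word.equiv.symm.injective (hw.trans CoprodI.Word.prod_empty.symm)
  exact w.toList_ne_nil (congrArg CoprodI.Word.toList hempty)

theorem exists_neWord_prod_eq_pow {i j : J} (hij : i ≠ j) {a : H i} {b : H j} (ha : a ≠ 1)
    (hb : b ≠ 1) (n : ℕ) :
    ∃ w : CoprodI.NeWord H i j, w.prod = (CoprodI.of a * CoprodI.of b) ^ (n + 1) := by
  let ab : CoprodI.NeWord H i j := .append (.singleton a ha) hij (.singleton b hb)
  have hab : ab.prod = CoprodI.of a * CoprodI.of b := by simp [ab]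
  induction n with
  | zero => exact ⟨ab, by simp [hab]⟩
  | succ n ih =>
    obtain ⟨w, hw⟩ := ih
    exact ⟨w.append hij.symm ab, by rw [CoprodI.NeWord.append_prod, hw, hab, ← pow_succ]⟩

theorem infinite_coprodI [Nontrivial J] [∀ j, Nontrivial (H j)] : Infinite (CoprodI H) := by
  obtain ⟨i, j, hij⟩ := exists_pair_ne J
  obtain ⟨a, ha⟩ := exists_ne (1 : H i)
  obtain ⟨b, hb⟩ := exists_ne (1 : H j)
  refine not_finite_iff_infinite.1 fun _ => ?_
  obtain ⟨n, hn, hpow⟩ := (isOfFinOrder_of_finite (CoprodI.of a * CoprodI.of b)).exists_pow_eq_one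
  obtain ⟨w, hw⟩ := exists_neWord_prod_eq_pow hij ha hb (n - 1)
  rw [Nat.sub_add_cancel hn, hpow] at hw
  exact neWord_prod_ne_one w hw

end InfiniteCoprodI

section Fuchsian

variable {r m : ℕ} {p : Fin m → ℕ}

/-- The order of the `j`-th generator of `F_r * C_{p_1} * ⋯ * C_{p_m}`, where `0` stands for
infinite order. -/
def generatorOrder (r : ℕ) (p : Fin m → ℕ) : Fin r ⊕ Fin m → ℕ :=
  Sum.elim (fun _ => 0) p

/-- The cyclic factor of `F_r * C_{p_1} * ⋯ * C_{p_m}` generated by the `j`-th generator; the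
infinite cyclic factors are encoded as `Multiplicative (ZMod 0)`. -/
abbrev FuchsianFactor (r : ℕ) (p : Fin m → ℕ) (j : Fin r ⊕ Fin m) : Type :=
  Multiplicative (ZMod (generatorOrder r p j))

/-- The `j`-th generator of `F_r * C_{p_1} * ⋯ * C_{p_m}` as an element of its cyclic factor. -/
def factorGen (r : ℕ) (p : Fin m → ℕ) (j : Fin r ⊕ Fin m) : FuchsianFactor r p j :=
  .ofAdd 1

theorem orderOf_factorGen (j : Fin r ⊕ Fin m) : orderOf (factorGen r p j) = generatorOrder r p j :=
  (orderOf_ofAdd_eq_addOrderOf _).trans (ZMod.addOrderOf_one _)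

theorem mem_zpowers_factorGen (j : Fin r ⊕ Fin m) (x : FuchsianFactor r p j) :
    x ∈ Subgroup.zpowers (factorGen r p j) := by
  obtain ⟨k, hk⟩ := ZMod.intCast_surjective x.toAdd
  exact ⟨k, Multiplicative.toAdd.injective (by simp [factorGen, hk])⟩

theorem of_pow_generatorOrder (j : Fin r ⊕ Fin m) :
    (PresentedGroup.of j : FuchsianFreeProduct r m p) ^ generatorOrder r p j = 1 := by
  rcases j with i | i
  · exact pow_zero _
  · exact PresentedGroup.one_of_mem ⟨i, rfl⟩

/-- The homomorphism from the presented group to the free product of cyclic groups. -/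
def fuchsianToCoprodI (r : ℕ) (p : Fin m → ℕ) :
    FuchsianFreeProduct r m p →* CoprodI (FuchsianFactor r p) :=
  PresentedGroup.toGroup (f := fun j => CoprodI.of (factorGen r p j)) <| by
    rintro _ ⟨i, rfl⟩
    have hpow : factorGen r p (.inr i) ^ p i = 1 :=
      orderOf_dvd_iff_pow_eq_one.1 (orderOf_factorGen _).dvd
    rw [map_pow, FreeGroup.lift_apply_of, ← map_pow, hpow, map_one]

/-- The homomorphism from the free product of cyclic groups to the presented group. -/
noncomputable def coprodIToFuchsian (r : ℕ) (p : Fin m → ℕ) :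
    CoprodI (FuchsianFactor r p) →* FuchsianFreeProduct r m p :=
  CoprodI.lift fun j => monoidHomOfForallMemZpowers (mem_zpowers_factorGen j)
    (g' := PresentedGroup.of j)
    ((orderOf_dvd_of_pow_eq_one (of_pow_generatorOrder j)).trans (orderOf_factorGen j).symm.dvd)

theorem coprodIToFuchsian_factorGen (j : Fin r ⊕ Fin m) :
    coprodIToFuchsian r p (CoprodI.of (factorGen r p j)) = PresentedGroup.of j := by
  rw [coprodIToFuchsian, CoprodI.lift_of, monoidHomOfForallMemZpowers_apply_gen]

/-- The presented group is the free product of the cyclic groups generated by its generators. -/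
noncomputable def fuchsianFreeProductEquiv (r : ℕ) (p : Fin m → ℕ) :
    FuchsianFreeProduct r m p ≃* CoprodI (FuchsianFactor r p) :=
  (fuchsianToCoprodI r p).toMulEquiv (coprodIToFuchsian r p)
    (PresentedGroup.ext fun j => by
      simp [fuchsianToCoprodI, coprodIToFuchsian_factorGen])
    (CoprodI.ext_hom _ _ fun j =>
      (MonoidHom.eq_iff_eq_on_generator (mem_zpowers_factorGen j) _ _).2 <| by
        simp [fuchsianToCoprodI, coprodIToFuchsian_factorGen])

theorem one_lt_add_of_sub_sum_pos (h : 0 < (r : ℝ) + (m : ℝ) - 1 - ∑ i, (1 : ℝ) / (p i : ℝ)) :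
    1 < r + m := by
  have hsum : 0 ≤ ∑ i, (1 : ℝ) / (p i : ℝ) := Finset.sum_nonneg fun i _ => by positivity
  exact_mod_cast (by linarith : (1 : ℝ) < r + m)

theorem infinite_fuchsianFreeProduct (hp : ∀ i, p i ≠ 1) (hrm : 1 < r + m) :
    Infinite (FuchsianFreeProduct r m p) := by
  have : Nontrivial (Fin r ⊕ Fin m) := Fintype.one_lt_card_iff_nontrivial.1 (by simpa using hrm)
  have (j : Fin r ⊕ Fin m) : Nontrivial (FuchsianFactor r p j) := by
    refine Multiplicative.toAdd.nontrivial_congr.2 (ZMod.nontrivial_iff.2 ?_)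
    rcases j with _ | i
    · exact zero_ne_one
    · exact hp i
  exact (fuchsianFreeProductEquiv r p).toEquiv.infinite_iff.2 infinite_coprodI

end Fuchsian

theorem irs_limit_fuchsian (r m : ℕ) (p : Fin m → ℕ) (hp : ∀ i, 2 ≤ p i)
    (h : 0 < (r : ℝ) + (m : ℝ) - 1 - ∑ i, (1 : ℝ) / (p i : ℝ))
    (g : FuchsianFreeProduct r m p) (hg : g ≠ 1) :
    (fun n : ℕ => subgroupExp (FuchsianFreeProduct r m p) n
        (fun H => (fixedCosetCount g H : ℝ))) =o[Filter.atTop] (fun n : ℕ => (n : ℝ)) := by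
  have := infinite_fuchsianFreeProduct
    (fun i => Nat.ne_of_gt (hp i)) (one_lt_add_of_sub_sum_pos h)
  exact irs_limit_fuchsian_general (fuchsianFreeProductEquiv r p) hg
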